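/- arXiv:1301.0379 — 5 statements merged into one kernel-verified Lean document; each statement's English description precedes it below -/
import Mathlib

section
/- If G is a subgroup of the symmetric group Sym(Ω) on a finite set Ω with |Ω| ≥ 2, and G acts transitively on Ω, then G contains a fixed point free element, i.e., there exists g ∈ G such that g(i) ≠ i for every i ∈ Ω. (Jordan's theorem) -/
/-!
By Burnside's lemma the elements of a finite group acting transitively fix one point each on
average. On a set with at least two points the identity exceeds this average, so some element must
fall below it, that is, fix no point at all. An infinite group acting on a finite set
may be replaced by its image in the finite symmetric group.
-/

section TransitiveAction

open MulAction

variable (G X : Type*) [Group G] [MulAction G X] [IsPretransitive G X]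

theorem sum_card_fixedBy_eq_card_of_isPretransitive [Nonempty X] [Fintype G]
    [∀ g : G, Fintype (fixedBy X g)] :
    ∑ g : G, Fintype.card (fixedBy X g) = Fintype.card G := by
  obtain ⟨_⟩ := (pretransitive_iff_unique_quotient_of_nonempty G X).mp ‹_›
  rw [sum_card_fixedBy_eq_card_orbits_mul_card_group, Fintype.card_unique, one_mul]

theorem exists_forall_smul_ne_of_finite_group [Nontrivial X] [Finite G] :
    ∃ g : G, ∀ x : X, g • x ≠ x := by
  classical
  have : Finite X := .of_surjective _ (surjective_smul G (Classical.arbitrary X))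
  have := Fintype.ofFinite G
  have := Fintype.ofFinite X
  by_contra! exists_fixed
  have one_le_card_fixedBy (g : G) : 1 ≤ Fintype.card (fixedBy X g) :=
    let ⟨x, hx⟩ := exists_fixed g
    Fintype.card_pos_iff.mpr ⟨⟨x, hx⟩⟩
  have one_lt_card_fixedBy_one : 1 < Fintype.card (fixedBy X (1 : G)) := by
    simpa using Fintype.one_lt_card (α := X)
  refine lt_irrefl (Fintype.card G) ?_
  calc
    Fintype.card G = ∑ _g : G, 1 := Fintype.card_eq_sum_ones
    _ < ∑ g : G, Fintype.card (fixedBy X g) :=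
      Finset.sum_lt_sum (fun g _ ↦ one_le_card_fixedBy g)
        ⟨1, Finset.mem_univ 1, one_lt_card_fixedBy_one⟩
    _ = Fintype.card G := sum_card_fixedBy_eq_card_of_isPretransitive G X

theorem jordan_fixed_point_free_general [Nontrivial X] [Finite X] :
    ∃ g : G, ∀ x : X, g • x ≠ x := by
  have : IsPretransitive (toPermHom G X).range X :=
    .of_smul_eq (M := G) (toPermHom G X).rangeRestrict rfl
  obtain ⟨⟨_, g, rfl⟩, hg⟩ := exists_forall_smul_ne_of_finite_group (toPermHom G X).range X
  exact ⟨g, hg⟩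

end TransitiveAction

/-- Jordan's theorem: a transitive permutation group on a finite set of size
at least 2 contains a fixed point free element. -/
theorem jordan_fixed_point_free {Ω : Type*} [Fintype Ω]
    (G : Subgroup (Equiv.Perm Ω)) (hΩ : 2 ≤ Fintype.card Ω)
    (htrans : ∀ x y : Ω, ∃ g ∈ G, g x = y) :
    ∃ g ∈ G, ∀ i : Ω, g i ≠ i := by
  have : Nontrivial Ω := Fintype.one_lt_card_iff_nontrivial.mp hΩ
  have : MulAction.IsPretransitive G Ω := ⟨by simpa [Subgroup.smul_def] using htrans⟩
  simpa [Subgroup.smul_def] using jordan_fixed_point_free_general G Ω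
end

section
/- If G is a subgroup of Sym(Ω) acting transitively on a finite set Ω with |Ω| = n ≥ 2, then the number of fixed point free elements of G is at least |G|/n; precisely, n · |{g ∈ G : g(i) ≠ i for all i ∈ Ω}| ≥ |G|. (Cameron–Cohen theorem) -/
/-! Write `f g` for the number of fixed points of `g` and `n` for the number of points. Then
`(f g - 1) * (n - f g)` is nonnegative as soon as `g` has a fixed point, and equals `-n` otherwise.
By Burnside's lemma, applied to the action on points and to the action on pairs, the averages of
`f` and `f ^ 2` over the group are the number of orbits on points, which is `1`, and the number `r`
of orbits on pairs. Averaging `(f - 1) * (n - f)` therefore bounds the proportion of fixed point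
free elements below by `(r - 1) / n`, and `2 ≤ r` because the diagonal is invariant. -/

open MulAction

-- This is `0 ≤ (f - 1) * (n - f)`, written without subtraction.
theorem mul_self_add_le_of_one_le_of_le {f n : ℕ} (hf : 1 ≤ f) (hfn : f ≤ n) :
    f * f + n ≤ (n + 1) * f := by
  obtain ⟨k, rfl⟩ := Nat.exists_eq_add_of_le hf
  obtain ⟨l, rfl⟩ := Nat.exists_eq_add_of_le hfn
  linarith [Nat.zero_le (k * l)]

section Monoid

variable {M α β : Type*} [Monoid M] [MulAction M α] [MulAction M β]

variable (M α) in
/-- The elements of `M` that act on `α` without fixed points: the analogue of `derangements α` for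
an action that need not be faithful. -/
def actionDerangements : Set M :=
  {m | ∀ a : α, m • a ≠ a}

theorem mem_actionDerangements_iff_fixedBy_eq_empty {m : M} :
    m ∈ actionDerangements M α ↔ fixedBy α m = ∅ :=
  Set.eq_empty_iff_forall_notMem.symm

theorem fixedBy_prod (m : M) : fixedBy (α × β) m = fixedBy α m ×ˢ fixedBy β m := by
  ext ⟨a, b⟩
  simp [Prod.ext_iff]

theorem ncard_fixedBy_mul_self_add_card_le [Finite α] (m : M)
    [Decidable (m ∈ actionDerangements M α)] :
    (fixedBy α m).ncard * (fixedBy α m).ncard + Nat.card α ≤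
      (Nat.card α + 1) * (fixedBy α m).ncard +
        Nat.card α * if m ∈ actionDerangements M α then 1 else 0 := by
  split_ifs with hm
  · simp [mem_actionDerangements_iff_fixedBy_eq_empty.mp hm]
  · have hpos : 1 ≤ (fixedBy α m).ncard := by
      rwa [Nat.one_le_iff_ne_zero, Ne, Set.ncard_eq_zero,
        ← mem_actionDerangements_iff_fixedBy_eq_empty]
    simpa using mul_self_add_le_of_one_le_of_le hpos (Set.ncard_le_card (fixedBy α m))

theorem finite_of_isPretransitive (M α : Type*) [Monoid M] [MulAction M α] [Finite M]
    [IsPretransitive M α] : Finite α := by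
  obtain _ | ⟨⟨a⟩⟩ := isEmpty_or_nonempty α
  · infer_instance
  · exact Finite.of_surjective (fun m : M => m • a) (exists_smul_eq M a)

end Monoid

theorem ncard_actionDerangements_subgroup {α : Type*} (H : Subgroup (Equiv.Perm α)) :
    (actionDerangements H α).ncard = (↑H ∩ derangements α : Set (Equiv.Perm α)).ncard := by
  rw [← Subtype.image_preimage_coe, Set.ncard_image_of_injective _ Subtype.val_injective]
  rfl

section Group

variable (G α β : Type*) [Group G] [MulAction G α] [MulAction G β]

theorem sum_ncard_fixedBy_eq_card_orbits_mul_card [Fintype G] [Finite α] :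
    ∑ g : G, (fixedBy α g).ncard = Nat.card (orbitRel.Quotient G α) * Nat.card G := by
  classical
  have := Fintype.ofFinite α
  have := Fintype.ofFinite (orbitRel.Quotient G α)
  simpa only [Fintype.card_eq_nat_card, Nat.card_coe_set_eq] using
    sum_card_fixedBy_eq_card_orbits_mul_card_group G α

theorem sum_ncard_fixedBy_mul_ncard_fixedBy [Fintype G] [Finite α] [Finite β] :
    ∑ g : G, (fixedBy α g).ncard * (fixedBy β g).ncard =
      Nat.card (orbitRel.Quotient G (α × β)) * Nat.card G := by
  simp only [← sum_ncard_fixedBy_eq_card_orbits_mul_card, fixedBy_prod, Set.ncard_prod]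

theorem nontrivial_orbitRel_quotient_prod_self [Nontrivial α] :
    Nontrivial (orbitRel.Quotient G (α × α)) := by
  obtain ⟨a, b, hab⟩ := exists_pair_ne α
  refine ⟨⟦(a, a)⟧, ⟦(a, b)⟧, fun h => hab ?_⟩
  obtain ⟨g, hg⟩ := Quotient.exact h
  obtain ⟨ha, hb⟩ := Prod.ext_iff.mp hg
  exact MulAction.injective g (ha.trans hb.symm)

theorem card_orbits_prod_add_card_mul_card_le [Finite G] [Finite α] :
    (Nat.card (orbitRel.Quotient G (α × α)) + Nat.card α) * Nat.card G ≤
      (Nat.card α + 1) * (Nat.card (orbitRel.Quotient G α) * Nat.card G) +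
        Nat.card α * (actionDerangements G α).ncard := by
  classical
  have := Fintype.ofFinite G
  have hderangements : ∑ g : G, (if g ∈ actionDerangements G α then 1 else 0) =
      (actionDerangements G α).ncard := by
    rw [Finset.sum_boole, Nat.cast_id, Set.ncard_eq_toFinset_card', Set.filter_mem_univ_eq_toFinset]
  calc
    _ = ∑ g : G, ((fixedBy α g).ncard * (fixedBy α g).ncard + Nat.card α) := by
      rw [Finset.sum_add_distrib, sum_ncard_fixedBy_mul_ncard_fixedBy, Finset.sum_const,
        Finset.card_univ, smul_eq_mul, Fintype.card_eq_nat_card]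
      ring
    _ ≤ ∑ g : G, ((Nat.card α + 1) * (fixedBy α g).ncard +
        Nat.card α * if g ∈ actionDerangements G α then 1 else 0) :=
      Finset.sum_le_sum fun g _ => ncard_fixedBy_mul_self_add_card_le g
    _ = _ := by
      rw [Finset.sum_add_distrib, ← Finset.mul_sum, ← Finset.mul_sum,
        sum_ncard_fixedBy_eq_card_orbits_mul_card, hderangements]

-- The subtraction truncates only when `α` is empty, and then both sides are `0`.
theorem cameron_cohen_general [Finite G] [IsPretransitive G α] :
    (Nat.card (orbitRel.Quotient G (α × α)) - 1) * Nat.card G ≤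
      Nat.card α * (actionDerangements G α).ncard := by
  have := finite_of_isPretransitive G α
  have hsub := (pretransitive_iff_subsingleton_quotient G α).mp inferInstance
  have horbits : Nat.card (orbitRel.Quotient G α) * Nat.card G ≤ Nat.card G :=
    mul_le_of_le_one_left (Nat.zero_le _) (Finite.card_le_one_iff_subsingleton.mpr hsub)
  have hbound := card_orbits_prod_add_card_mul_card_le G α
  rw [Nat.sub_mul, one_mul, Nat.sub_le_iff_le_add]
  linarith [Nat.mul_le_mul_left (Nat.card α + 1) horbits]

theorem card_le_card_mul_ncard_actionDerangements [Finite G] [Nontrivial α]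
    [IsPretransitive G α] :
    Nat.card G ≤ Nat.card α * (actionDerangements G α).ncard := by
  have := finite_of_isPretransitive G α
  have := nontrivial_orbitRel_quotient_prod_self G α
  have hrank : 1 < Nat.card (orbitRel.Quotient G (α × α)) := Finite.one_lt_card
  exact (Nat.le_mul_of_pos_left _ (Nat.sub_pos_of_lt hrank)).trans (cameron_cohen_general G α)

end Group

/-- Cameron–Cohen: a transitive permutation group `G` on a finite set of size
`n ≥ 2` has at least `|G|/n` fixed point free elements. -/
theorem cameron_cohen {Ω : Type*} [Fintype Ω]
    (G : Subgroup (Equiv.Perm Ω)) (hΩ : 2 ≤ Fintype.card Ω)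
    (htrans : ∀ x y : Ω, ∃ g ∈ G, g x = y) :
    Nat.card G ≤
      Fintype.card Ω * Nat.card {g : Equiv.Perm Ω | g ∈ G ∧ ∀ i : Ω, g i ≠ i} := by
  have : Nontrivial Ω := Fintype.one_lt_card_iff_nontrivial.mp hΩ
  have : IsPretransitive G Ω :=
    ⟨fun x y => let ⟨g, hg, hgx⟩ := htrans x y; ⟨⟨g, hg⟩, hgx⟩⟩
  have hbound := card_le_card_mul_ncard_actionDerangements G Ω
  rwa [ncard_actionDerangements_subgroup, Nat.card_eq_fintype_card (α := Ω)] at hbound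
end

section
/- Let G ≤ Sym(Ω) act transitively on a finite set Ω with |Ω| = n ≥ 2, let α ∈ Ω, let G_α be the stabilizer of α in G, and let orb(G_α) denote the number of orbits of G_α on Ω. Then the number of fixed point free elements of G is at least (orb(G_α) − 1) · |G_α|, which equals (orb(G_α) − 1) · |G|/n. -/
/-!
Let `fix g` be the number of fixed points of `g` and `n` the number of points, and average
`(fix g - 1) * (fix g - n)` over the group. By Burnside's lemma on `X` and on `X × X`, the mean of
`fix` is the number of orbits on `X` and the mean of `fix ^ 2` is the number of orbits on `X × X`,
which for a transitive action is the number `r` of orbits of a point stabilizer; so the average is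
`r - 1`. Each `g` with a fixed point contributes at most `0` and each `g` without one contributes
`n`, hence there are at least `(r - 1) * |G| / n` of the latter.
-/

open MulAction

section Burnside

variable {G X Y : Type*} [Group G] [MulAction G X] [MulAction G Y]

theorem fixedBy_prod_eq (g : G) : fixedBy (X × Y) g = fixedBy X g ×ˢ fixedBy Y g := by
  ext ⟨x, y⟩
  simp only [mem_fixedBy, Prod.smul_mk, Prod.mk.injEq, Set.mem_prod]

variable (G X) in
theorem sum_ncard_fixedBy [Fintype G] [Finite X] :
    ∑ g : G, (fixedBy X g).ncard = Nat.card (orbitRel.Quotient G X) * Nat.card G := by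
  rw [← Nat.card_prod, ← Nat.card_congr (sigmaFixedByEquivOrbitsProdGroup G X), Nat.card_sigma]
  rfl

variable (G X) in
theorem sum_ncard_fixedBy_sq [Fintype G] [Finite X] :
    ∑ g : G, (fixedBy X g).ncard ^ 2 = Nat.card (orbitRel.Quotient G (X × X)) * Nat.card G := by
  simp only [← sum_ncard_fixedBy, fixedBy_prod_eq, Set.ncard_prod, sq]

variable (Y) in
theorem card_orbits_stabilizer_eq_card_orbits_prod [IsPretransitive G X] (x : X) :
    Nat.card (orbitRel.Quotient (stabilizer G x) Y) = Nat.card (orbitRel.Quotient G (X × Y)) := by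
  refine Nat.card_eq_of_bijective
    (Quotient.map (Prod.mk x) fun _ y ⟨h, hy⟩ ↦ ⟨h, Prod.ext h.2 hy⟩) ⟨?injective, ?surjective⟩
  case injective =>
    rintro ⟨y⟩ ⟨z⟩ hyz
    obtain ⟨g, hg⟩ := Quotient.exact hyz
    exact Quotient.sound ⟨⟨g, congrArg Prod.fst hg⟩, congrArg Prod.snd hg⟩
  case surjective =>
    rintro ⟨w, y⟩
    obtain ⟨g, hg⟩ := exists_smul_eq G w x
    exact ⟨⟦g • y⟧, Quotient.sound ⟨g, Prod.ext hg rfl⟩⟩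

end Burnside

section FixedPointFree

variable {G X : Type*} [Group G] [MulAction G X]

-- That is, `(fix g - 1) * (fix g - n)` is at most `n` if `fix g = 0` and at most `0` otherwise,
-- rearranged to avoid truncated subtraction.
theorem ncard_fixedBy_sq_add_card_le [Finite X] (g : G) [Decidable (∀ x : X, g • x ≠ x)] :
    (fixedBy X g).ncard ^ 2 + Nat.card X ≤
      (Nat.card X + 1) * (fixedBy X g).ncard + if ∀ x : X, g • x ≠ x then Nat.card X else 0 := by
  split_ifs with hg
  · have fix_eq_zero : (fixedBy X g).ncard = 0 := by
      rw [Set.ncard_eq_zero]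
      exact Set.eq_empty_of_forall_notMem hg
    simp [fix_eq_zero]
  · have one_le_fix : 1 ≤ (fixedBy X g).ncard := by
      push Not at hg
      exact (Set.ncard_pos).mpr hg
    have fix_le_card : (fixedBy X g).ncard ≤ Nat.card X := Set.ncard_le_card _
    nlinarith

variable (G X) in
theorem card_orbits_prod_add_card_mul_card_group_le [Finite G] [Finite X] :
    (Nat.card (orbitRel.Quotient G (X × X)) + Nat.card X) * Nat.card G ≤
      (Nat.card X + 1) * (Nat.card (orbitRel.Quotient G X) * Nat.card G) +
        Nat.card X * Nat.card {g : G | ∀ x : X, g • x ≠ x} := by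
  classical
  cases nonempty_fintype G
  calc (Nat.card (orbitRel.Quotient G (X × X)) + Nat.card X) * Nat.card G
    _ = ∑ g : G, ((fixedBy X g).ncard ^ 2 + Nat.card X) := by
      rw [Finset.sum_add_distrib, sum_ncard_fixedBy_sq, Finset.sum_const, Finset.card_univ,
        ← Nat.card_eq_fintype_card, smul_eq_mul]
      ring
    _ ≤ ∑ g : G, ((Nat.card X + 1) * (fixedBy X g).ncard +
          if ∀ x : X, g • x ≠ x then Nat.card X else 0) :=
      Finset.sum_le_sum fun g _ ↦ ncard_fixedBy_sq_add_card_le g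
    _ = _ := by
      rw [Finset.sum_add_distrib, ← Finset.mul_sum, sum_ncard_fixedBy, ← Finset.sum_filter,
        Finset.sum_const, smul_eq_mul, mul_comm (Finset.card _), ← Fintype.card_subtype,
        ← Nat.card_eq_fintype_card]
      rfl

variable (G) in
theorem card_mul_card_stabilizer_of_isPretransitive [IsPretransitive G X] (x : X) :
    Nat.card X * Nat.card (stabilizer G x) = Nat.card G := by
  rw [← index_stabilizer_of_transitive G x, Subgroup.index_mul_card]

theorem cameron_cohen_refined_general [Finite G] [IsPretransitive G X] (x : X) :
    (Nat.card (orbitRel.Quotient (stabilizer G x) X) - 1) * Nat.card (stabilizer G x) ≤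
      Nat.card {g : G | ∀ y : X, g • y ≠ y} ∧
    (Nat.card (orbitRel.Quotient (stabilizer G x) X) - 1) * Nat.card (stabilizer G x) =
      (Nat.card (orbitRel.Quotient (stabilizer G x) X) - 1) * Nat.card G / Nat.card X := by
  have : Finite X := Finite.of_surjective (· • x) (exists_smul_eq G x)
  have : Nonempty X := ⟨x⟩
  have card_X_pos : 0 < Nat.card X := Nat.card_pos
  have card_G := card_mul_card_stabilizer_of_isPretransitive G x
  constructor
  · have card_orbits : Nat.card (orbitRel.Quotient G X) = 1 :=
      Nat.card_eq_one_iff_unique.mpr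
        ⟨(pretransitive_iff_subsingleton_quotient G X).mp inferInstance, ⟨⟦x⟧⟩⟩
    have averaged := card_orbits_prod_add_card_mul_card_group_le G X
    rw [card_orbits, ← card_orbits_stabilizer_eq_card_orbits_prod X x, ← card_G] at averaged
    refine le_of_mul_le_mul_left ?_ card_X_pos
    rw [Nat.sub_one_mul, Nat.mul_sub, Nat.sub_le_iff_le_add]
    linarith
  · rw [← card_G, mul_left_comm, Nat.mul_div_cancel_left _ card_X_pos]

end FixedPointFree

theorem card_fixedPointFree_subgroup {Ω : Type*} (G : Subgroup (Equiv.Perm Ω)) :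
    Nat.card {g : G | ∀ i : Ω, g • i ≠ i} =
      Nat.card {g : Equiv.Perm Ω | g ∈ G ∧ ∀ i : Ω, g i ≠ i} :=
  Nat.card_congr (Equiv.subtypeSubtypeEquivSubtypeInter (· ∈ G) fun g ↦ ∀ i : Ω, g i ≠ i)

/-- Refined Cameron–Cohen bound: for a transitive group `G` on `n ≥ 2` points,
the number of fixed point free elements is at least `(orb(G_α) - 1) * |G_α|`,
which equals `(orb(G_α) - 1) * |G| / n`. -/
theorem cameron_cohen_refined {Ω : Type*} [Fintype Ω]
    (G : Subgroup (Equiv.Perm Ω)) (hΩ : 2 ≤ Fintype.card Ω)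
    (htrans : ∀ x y : Ω, ∃ g ∈ G, g x = y) (α : Ω) :
    (Nat.card (MulAction.orbitRel.Quotient (MulAction.stabilizer G α) Ω) - 1) *
        Nat.card (MulAction.stabilizer G α) ≤
      Nat.card {g : Equiv.Perm Ω | g ∈ G ∧ ∀ i : Ω, g i ≠ i} ∧
    (Nat.card (MulAction.orbitRel.Quotient (MulAction.stabilizer G α) Ω) - 1) *
        Nat.card (MulAction.stabilizer G α) =
      (Nat.card (MulAction.orbitRel.Quotient (MulAction.stabilizer G α) Ω) - 1) *
        Nat.card G / Fintype.card Ω := by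
  have : IsPretransitive G Ω := ⟨fun x y ↦ by
    obtain ⟨g, hg, hgx⟩ := htrans x y
    exact ⟨⟨g, hg⟩, hgx⟩⟩
  rw [← card_fixedPointFree_subgroup, ← Nat.card_eq_fintype_card]
  exact cameron_cohen_refined_general α
end

section
/- Let G ≤ Sym(Ω) be a permutation group on a finite set Ω and let k be a natural number. If move(G) ≥ 2k, then there exists g ∈ G with move(g) ≥ k; that is, if at least 2k points of Ω are moved by some element of G, then a single element of G moves at least k points. -/
/-!
A point that is not fixed by the finite group `G` has a proper stabilizer, so at most half of the
elements of `G` fix it. Hence, for a finite set `s` of such points, the average over `g ∈ G` of the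
number of points of `s` fixed by `g` is at most `#s / 2`, and some `g` does no worse than average.
-/

open Finset MulAction

section FiniteGroup

variable {G α : Type*} [Group G] [Finite G]

theorem two_mul_card_subgroup_le_of_ne_top {H : Subgroup G} (hH : H ≠ ⊤) :
    2 * Nat.card H ≤ Nat.card G := by
  rw [← H.index_mul_card]
  exact Nat.mul_le_mul_right _ (H.one_lt_index_of_ne_top hH)

variable [MulAction G α]

theorem two_mul_card_stabilizer_le {a : α} (ha : ∃ g : G, g • a ≠ a) :
    2 * Nat.card (stabilizer G a) ≤ Nat.card G := by
  obtain ⟨g, hg⟩ := ha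
  exact two_mul_card_subgroup_le_of_ne_top fun h ↦
    hg <| mem_stabilizer_iff.1 (h ▸ Subgroup.mem_top g)

theorem exists_two_mul_card_filter_smul_eq_le [DecidableEq α] {s : Finset α}
    (hs : ∀ a ∈ s, ∃ g : G, g • a ≠ a) :
    ∃ g : G, 2 * #{a ∈ s | g • a = a} ≤ #s := by
  have := Fintype.ofFinite G
  have card_stabilizer (a : α) : #{g : G | g • a = a} = Nat.card (stabilizer G a) :=
    (Nat.subtype_card _ <| by simp).symm
  have double_count : ∑ g : G, #{a ∈ s | g • a = a} = ∑ a ∈ s, #{g : G | g • a = a} :=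
    sum_card_bipartiteAbove_eq_sum_card_bipartiteBelow fun (g : G) a ↦ g • a = a
  suffices sum_le : ∑ g : G, 2 * #{a ∈ s | g • a = a} ≤ ∑ _g : G, #s by
    simpa using exists_le_of_sum_le univ_nonempty sum_le
  calc
    ∑ g : G, 2 * #{a ∈ s | g • a = a} = ∑ a ∈ s, 2 * Nat.card (stabilizer G a) := by
      simp only [← mul_sum, double_count, card_stabilizer]
    _ ≤ ∑ _a ∈ s, Nat.card G := sum_le_sum fun a ha ↦ two_mul_card_stabilizer_le (hs a ha)
    _ = ∑ _g : G, #s := by simp [mul_comm]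

theorem exists_k_mover_general (k : ℕ)
    (hmove : 2 * k ≤ {a : α | ∃ g : G, g • a ≠ a}.encard) :
    ∃ g : G, k ≤ {a : α | g • a ≠ a}.encard := by
  classical
  obtain ⟨t, ht, htcard⟩ := Set.exists_subset_encard_eq hmove
  lift t to Finset α using Set.finite_of_encard_eq_coe (k := 2 * k) (mod_cast htcard)
  replace htcard : #t = 2 * k := by exact_mod_cast htcard
  obtain ⟨g, hg⟩ := exists_two_mul_card_filter_smul_eq_le ht
  have hk : k ≤ #{a ∈ t | g • a ≠ a} := by
    have : #{a ∈ t | g • a = a} + #{a ∈ t | g • a ≠ a} = #t := card_filter_add_card_filter_not _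
    omega
  refine ⟨g, (Nat.cast_le.2 hk).trans ?_⟩
  rw [← Set.encard_coe_eq_coe_finsetCard]
  exact Set.encard_le_encard fun a ha ↦ (mem_filter.1 ha).2

end FiniteGroup

/-- If at least `2k` points of `Ω` are moved by some element of `G`, then a
single element of `G` moves at least `k` points. -/
theorem exists_k_mover {Ω : Type*} [Fintype Ω]
    (G : Subgroup (Equiv.Perm Ω)) (k : ℕ)
    (hmove : 2 * k ≤ Nat.card {i : Ω | ∃ g ∈ G, g i ≠ i}) :
    ∃ g ∈ G, k ≤ Nat.card {i : Ω | g i ≠ i} := by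
  simp only [Nat.card_coe_set_eq, ← Nat.cast_le (α := ℕ∞), (Set.toFinite _).cast_ncard_eq]
    at hmove ⊢
  simpa [Subgroup.smul_def] using
    exists_k_mover_general (G := G) (α := Ω) k (by simpa [Subgroup.smul_def] using hmove)
end

section
/- Let G = ⟨g⟩ ≤ Sym(Ω) be a cyclic permutation group on a finite set Ω, where g has order N = p_1^{e_1} p_2^{e_2} ⋯ p_ℓ^{e_ℓ} for distinct primes p_1, …, p_ℓ (e_i ≥ 1). For each i, let g_i = g^{N / p_i^{e_i}} (an element of order p_i^{e_i}), and let S_i = {α ∈ Ω : the ⟨g_i⟩-orbit of α has size exactly p_i^{e_i}} (the points lying on a cycle of g_i of length p_i^{e_i}). Then a subset B ⊆ Ω is a base for G (i.e., the pointwise stabilizer of B in G is trivial) if and only if B ∩ S_i ≠ ∅ for every i ∈ {1, …, ℓ}. -/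
/-!
Let `N` be the order of `g`. A nontrivial subgroup of `⟨g⟩` contains `g ^ (N / q)` for some prime
`q ∣ N`, so `B` is a base if and only if it is fixed pointwise by none of the `g ^ (N / pᵢ)`. Now
`g ^ (N / pᵢ) = gᵢ ^ (pᵢ ^ (eᵢ - 1))`, and the cycle lengths of `gᵢ` divide `pᵢ ^ eᵢ`; hence the
points moved by `g ^ (N / pᵢ)` are exactly those on a cycle of `gᵢ` of full length `pᵢ ^ eᵢ`.
-/

theorem prime_dvd_prod_prime_pow_iff {ι : Type*} {s : Finset ι} {p e : ι → ℕ} {q : ℕ}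
    (hp : ∀ i ∈ s, (p i).Prime) (he : ∀ i ∈ s, e i ≠ 0) (hq : q.Prime) :
    q ∣ ∏ i ∈ s, p i ^ e i ↔ ∃ i ∈ s, q = p i := by
  rw [hq.prime.dvd_finsetProd_iff]
  refine exists_congr fun i ↦ and_congr_right fun hi ↦ ?_
  rw [hq.prime.dvd_pow_iff_dvd (he i hi), Nat.prime_dvd_prime_iff_eq hq (hp i hi)]

section Group

variable {G : Type*} [Group G]

theorem zpowers_zpow_eq_zpowers_pow_gcd (g : G) (k : ℤ) :
    Subgroup.zpowers (g ^ k) = Subgroup.zpowers (g ^ k.gcd (orderOf g)) := by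
  apply le_antisymm <;> rw [Subgroup.zpowers_le]
  · obtain ⟨m, hm⟩ := Int.gcd_dvd_left k (orderOf g)
    exact ⟨m, by simp only [← zpow_natCast, ← zpow_mul, ← hm]⟩
  · refine ⟨k.gcdA (orderOf g), ?_⟩
    symm
    calc g ^ k.gcd (orderOf g)
      _ = g ^ (k * k.gcdA (orderOf g) + orderOf g * k.gcdB (orderOf g)) := by
        rw [← zpow_natCast, Int.gcd_eq_gcd_ab]
      _ = (g ^ k) ^ k.gcdA (orderOf g) := by
        rw [zpow_add, zpow_mul, zpow_mul, zpow_natCast, pow_orderOf_eq_one, one_zpow, mul_one]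

theorem exists_prime_pow_orderOf_div_mem_zpowers {g h : G} (hh : h ∈ Subgroup.zpowers g)
    (h_ne : h ≠ 1) :
    ∃ q, q.Prime ∧ q ∣ orderOf g ∧ g ^ (orderOf g / q) ∈ Subgroup.zpowers h := by
  obtain ⟨k, rfl⟩ := Subgroup.mem_zpowers_iff.1 hh
  obtain ⟨d, hd⟩ : ∃ d, d = k.gcd (orderOf g) := ⟨_, rfl⟩
  have zpowers_eq : Subgroup.zpowers (g ^ k) = Subgroup.zpowers (g ^ d) :=
    hd ▸ zpowers_zpow_eq_zpowers_pow_gcd g k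
  obtain ⟨m, hm⟩ : d ∣ orderOf g := hd ▸ Int.gcd_dvd_natAbs_right k (orderOf g)
  have m_ne_one : m ≠ 1 := by
    rintro rfl
    rw [← mul_one d, ← hm, pow_orderOf_eq_one, Subgroup.zpowers_one_eq_bot,
      Subgroup.zpowers_eq_bot] at zpowers_eq
    exact h_ne zpowers_eq
  obtain ⟨q, hq, t, rfl⟩ := Nat.exists_prime_and_dvd m_ne_one
  have order_eq : orderOf g = q * (d * t) := by rw [hm, mul_left_comm]
  refine ⟨q, hq, ⟨_, order_eq⟩, ?_⟩
  rw [zpowers_eq, Nat.div_eq_of_eq_mul_right hq.pos order_eq, pow_mul]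
  exact Subgroup.npow_mem_zpowers _ t

theorem disjoint_zpowers_iff_forall_prime {g : G} (hg : IsOfFinOrder g) (H : Subgroup G) :
    Disjoint (Subgroup.zpowers g) H ↔
      ∀ q : ℕ, q.Prime → q ∣ orderOf g → g ^ (orderOf g / q) ∉ H := by
  rw [Subgroup.disjoint_def]
  constructor
  · intro eq_one q hq hdvd hmem
    exact pow_ne_one_of_lt_orderOf
      (Nat.div_pos (Nat.le_of_dvd hg.orderOf_pos hdvd) hq.pos).ne'
      (Nat.div_lt_self hg.orderOf_pos hq.one_lt) (eq_one (Subgroup.npow_mem_zpowers g _) hmem)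
  · intro notMem h hh hH
    by_contra h_ne
    obtain ⟨q, hq, hdvd, hmem⟩ := exists_prime_pow_orderOf_div_mem_zpowers hh h_ne
    exact notMem q hq hdvd (Subgroup.zpowers_le.2 hH hmem)

end Group

section MulAction

theorem period_eq_prime_pow_succ_iff {M α : Type*} [Monoid M] [MulAction M α] {p f : ℕ}
    (hp : p.Prime) {m : M} {a : α} (hfix : m ^ p ^ (f + 1) • a = a) :
    MulAction.period m a = p ^ (f + 1) ↔ m ^ p ^ f • a ≠ a := by
  rw [MulAction.pow_smul_eq_iff_period_dvd] at hfix
  rw [Ne, MulAction.pow_smul_eq_iff_period_dvd]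
  refine ⟨fun period_eq hdvd ↦ ?_, fun not_dvd ↦
    Nat.eq_prime_pow_of_dvd_least_prime_pow hp not_dvd hfix⟩
  rw [period_eq, Nat.pow_dvd_pow_iff_le_right hp.one_lt] at hdvd
  exact Nat.not_succ_le_self f hdvd

variable {G α : Type*} [Group G] [MulAction G α]

theorem card_orbit_zpowers (g : G) (a : α) :
    Nat.card (MulAction.orbit (Subgroup.zpowers g) a) = MulAction.period g a :=
  (Nat.card_congr (MulAction.orbitZPowersEquiv g a)).trans (Nat.card_zmod _)

theorem card_orbit_zpowers_pow_orderOf_div_eq_iff {p e : ℕ} (hp : p.Prime) (he : e ≠ 0) {g : G}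
    (hdvd : p ^ e ∣ orderOf g) (a : α) :
    Nat.card (MulAction.orbit (Subgroup.zpowers (g ^ (orderOf g / p ^ e))) a) = p ^ e ↔
      g ^ (orderOf g / p) • a ≠ a := by
  obtain ⟨f, rfl⟩ := Nat.exists_eq_succ_of_ne_zero he
  have pow_eq_one : (g ^ (orderOf g / p ^ (f + 1))) ^ p ^ (f + 1) = 1 := by
    rw [← pow_mul, Nat.div_mul_cancel hdvd, pow_orderOf_eq_one]
  have div_mul_pow : orderOf g / p ^ (f + 1) * p ^ f = orderOf g / p := by
    rw [pow_succ', ← Nat.div_div_eq_div_mul,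
      Nat.div_mul_cancel (Nat.dvd_div_of_mul_dvd (pow_succ' p f ▸ hdvd))]
  rw [card_orbit_zpowers,
    period_eq_prime_pow_succ_iff hp (by rw [pow_eq_one, one_smul]), ← pow_mul, div_mul_pow]

theorem disjoint_zpowers_fixingSubgroup_iff {g : G} (hg : IsOfFinOrder g) (B : Set α) :
    Disjoint (Subgroup.zpowers g) (fixingSubgroup G B) ↔
      ∀ q : ℕ, q.Prime → q ∣ orderOf g → ∃ b ∈ B, g ^ (orderOf g / q) • b ≠ b := by
  simp only [disjoint_zpowers_iff_forall_prime hg, mem_fixingSubgroup_iff, not_forall, exists_prop,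
    ne_eq]

theorem cyclic_base_iff_hitting_general {ι : Type*} [Fintype ι] (g : G) (p e : ι → ℕ)
    (hp : ∀ i, (p i).Prime) (he : ∀ i, e i ≠ 0) (hord : orderOf g = ∏ i, p i ^ e i) (B : Set α) :
    (∀ h ∈ Subgroup.zpowers g, (∀ b ∈ B, h • b = b) → h = 1) ↔
      ∀ i, (B ∩ {a : α |
        Nat.card (MulAction.orbit
          (Subgroup.zpowers (g ^ (orderOf g / p i ^ e i))) a) = p i ^ e i}).Nonempty := by
  have hg : IsOfFinOrder g := orderOf_ne_zero_iff.1 <|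
    hord ▸ Finset.prod_ne_zero_iff.2 fun i _ ↦ pow_ne_zero _ (hp i).ne_zero
  have pow_dvd_order (i : ι) : p i ^ e i ∣ orderOf g :=
    hord ▸ Finset.dvd_prod_of_mem _ (Finset.mem_univ i)
  have prime_dvd_order_iff {q : ℕ} (hq : q.Prime) : q ∣ orderOf g ↔ ∃ i, q = p i := by
    simpa [hord] using
      prime_dvd_prod_prime_pow_iff (s := .univ) (fun i _ ↦ hp i) (fun i _ ↦ he i) hq
  calc (∀ h ∈ Subgroup.zpowers g, (∀ b ∈ B, h • b = b) → h = 1)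
    _ ↔ Disjoint (Subgroup.zpowers g) (fixingSubgroup G B) := by
      simp only [Subgroup.disjoint_def, mem_fixingSubgroup_iff]
    _ ↔ ∀ q : ℕ, q.Prime → q ∣ orderOf g → ∃ b ∈ B, g ^ (orderOf g / q) • b ≠ b :=
      disjoint_zpowers_fixingSubgroup_iff hg B
    _ ↔ ∀ i, ∃ b ∈ B, g ^ (orderOf g / p i) • b ≠ b :=
      ⟨fun moves i ↦ moves _ (hp i) ((prime_dvd_order_iff (hp i)).2 ⟨i, rfl⟩),
        fun moves _ hq hdvd ↦ by
          obtain ⟨i, rfl⟩ := (prime_dvd_order_iff hq).1 hdvd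
          exact moves i⟩
    _ ↔ _ := forall_congr' fun i ↦ exists_congr fun b ↦ and_congr_right fun _ ↦
      (card_orbit_zpowers_pow_orderOf_div_eq_iff (hp i) (he i) (pow_dvd_order i) b).symm

end MulAction

/-- Base characterization for cyclic permutation groups: if `g` has order
`N = ∏ pᵢ^{eᵢ}` (distinct primes `pᵢ`), `gᵢ = g^(N / pᵢ^{eᵢ})` and
`Sᵢ` is the set of points lying on a cycle of `gᵢ` of length `pᵢ^{eᵢ}`,
then `B ⊆ Ω` is a base for `⟨g⟩` iff `B` meets every `Sᵢ`. -/
theorem cyclic_base_iff_hitting {Ω : Type*} [Fintype Ω]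
    (g : Equiv.Perm Ω) {ℓ : ℕ} (p e : Fin ℓ → ℕ)
    (hp : ∀ i, (p i).Prime) (hdist : Function.Injective p)
    (he : ∀ i, 1 ≤ e i)
    (hord : orderOf g = ∏ i, p i ^ e i) (B : Set Ω) :
    (∀ h ∈ Subgroup.zpowers g, (∀ b ∈ B, h b = b) → h = 1) ↔
      ∀ i, (B ∩ {α : Ω |
        Nat.card (MulAction.orbit
          (Subgroup.zpowers (g ^ (orderOf g / p i ^ e i))) α) = p i ^ e i}).Nonempty :=
  cyclic_base_iff_hitting_general g p e hp (fun i ↦ Nat.one_le_iff_ne_zero.1 (he i)) hord B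
end
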